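/- arXiv:2112.10181 — 9 statements merged into one kernel-verified Lean document; each statement's English description precedes it below -/
import Mathlib

section
/- Let $X$ be a real vector space, $D \subseteq X$ a convex set, and $f_1, \dots, f_n : D \to \mathbb{R}$ convex functions such that $0 \le \max(f_1(x), \dots, f_n(x))$ for all $x \in D$. Then there exist $\lambda_1, \dots, \lambda_n \ge 0$ with $\lambda_1 + \cdots + \lambda_n = 1$ such that $0 \le \lambda_1 f_1(x) + \cdots + \lambda_n f_n(x)$ for all $x \in D$. -/
/-- Maximum Theorem of Dubovitskii and Milyutin for convex functions. -/
theorem maximum_theorem_convex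
    {X : Type*} [AddCommGroup X] [Module ℝ X]
    {D : Set X} (hD : Convex ℝ D)
    {n : ℕ} (hn : 0 < n) (f : Fin n → X → ℝ)
    (hconv : ∀ i, ConvexOn ℝ D (f i))
    (hmax : ∀ x ∈ D, 0 ≤ Finset.univ.sup' ⟨⟨0, hn⟩, Finset.mem_univ _⟩ fun i => f i x) :
    ∃ lam : Fin n → ℝ, (∀ i, 0 ≤ lam i) ∧ (∑ i, lam i = 1) ∧
      ∀ x ∈ D, 0 ≤ ∑ i, lam i * f i x := by
  rcases D.eq_empty_or_nonempty with rfl | ⟨x0, hx0⟩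
  · refine ⟨fun i => if i = ⟨0, hn⟩ then 1 else 0, fun i => ?_, by simp, by simp⟩
    dsimp only
    split_ifs <;> norm_num
  let t : Set (Fin n → ℝ) := {y | ∃ x ∈ D, ∀ i, f i x < y i}
  have ht : Convex ℝ t := by
    rintro y ⟨x, hx, hxy⟩ z ⟨w, hw, hwz⟩ a b ha hb hab
    refine ⟨a • x + b • w, hD hx hw ha hb hab, fun i => ?_⟩
    have h1 := (hconv i).2 hx hw ha hb hab
    simp only [smul_eq_mul, Pi.add_apply, Pi.smul_apply] at h1 ⊢
    have h2 := hxy i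
    have h3 := hwz i
    rcases ha.eq_or_lt with rfl | ha'
    · have : b = 1 := by linarith
      subst this
      linarith
    · have := mul_lt_mul_of_pos_left h2 ha'
      have := mul_le_mul_of_nonneg_left h3.le hb
      linarith
  have hto : IsOpen t := by
    have : t = ⋃ x ∈ D, ⋂ i, {y : Fin n → ℝ | f i x < y i} := by
      ext y
      simp [t]
    rw [this]
    exact isOpen_biUnion fun x _ => isOpen_iInter_of_finite fun i =>
      isOpen_lt continuous_const (continuous_apply i)
  have h0 : (0 : Fin n → ℝ) ∉ t := by
    rintro ⟨x, hx, h⟩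
    have h1 := hmax x hx
    obtain ⟨i, -, hi⟩ := (Finset.le_sup'_iff _).1 h1
    exact absurd (h i) (not_lt.2 hi)
  obtain ⟨g, hg⟩ := geometric_hahn_banach_point_open ht hto h0
  rw [map_zero] at hg
  obtain ⟨c, hc⟩ : ∃ c : Fin n → ℝ, ∀ y, g y = ∑ i, c i * y i := by
    refine ⟨fun i => g (fun j => if i = j then 1 else 0), fun y => ?_⟩
    have := LinearMap.pi_apply_eq_sum_univ (g : (Fin n → ℝ) →ₗ[ℝ] ℝ) y
    simpa [mul_comm] using this
  have hcn : ∀ i, 0 ≤ c i := by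
    intro i
    by_contra! hi
    have key : ∀ M : ℝ, 0 ≤ M → 0 < ∑ j, c j * (f j x0 + 1) + c i * M := by
      intro M hM
      have := hg (fun j => (f j x0 + 1) + if j = i then M else 0) ⟨x0, hx0, fun j => by
        dsimp only
        split_ifs <;> linarith⟩
      rw [hc] at this
      simpa [mul_add, Finset.sum_add_distrib] using this
    have k0 := key 0 le_rfl
    have k1 := key ((∑ j, c j * (f j x0 + 1)) / (-c i))
      (div_nonneg (by linarith) (by linarith))
    have : c i * ((∑ j, c j * (f j x0 + 1)) / (-c i)) = -(∑ j, c j * (f j x0 + 1)) := by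
      rw [div_neg, mul_neg, mul_div_cancel₀ _ hi.ne]
    linarith
  have hs : 0 < ∑ i, c i := by
    refine (Finset.sum_nonneg fun i _ => hcn i).lt_of_ne' fun h => ?_
    have hz := (Finset.sum_eq_zero_iff_of_nonneg fun i _ => hcn i).1 h
    have := hg (fun j => f j x0 + 1) ⟨x0, hx0, fun j => by dsimp only; linarith⟩
    rw [hc, Finset.sum_eq_zero fun i hi => by rw [hz i hi, zero_mul]] at this
    exact lt_irrefl _ this
  refine ⟨fun i => c i / ∑ j, c j, fun i => div_nonneg (hcn i) hs.le, ?_, fun x hx => ?_⟩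
  · rw [← Finset.sum_div, div_self hs.ne']
  · have hfx : 0 ≤ ∑ i, c i * f i x := by
      refine le_of_forall_pos_le_add fun e he => ?_
      have := hg (fun j => f j x + e / ∑ j, c j) ⟨x, hx, fun j => by
        have := div_pos he hs
        dsimp only
        linarith⟩
      rw [hc] at this
      simp only [mul_add, Finset.sum_add_distrib, ← Finset.sum_mul] at this
      rw [mul_div_cancel₀ _ hs.ne'] at this
      exact this.le
    have : ∑ i, c i / (∑ j, c j) * f i x = (∑ i, c i * f i x) / ∑ j, c j := by
      rw [Finset.sum_div]
      exact Finset.sum_congr rfl fun i _ => by ring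
    rw [this]
    exact div_nonneg hfx hs.le
end

section
/- Let $(X, +)$ be an Abelian (commutative) semigroup and let $f_1, \dots, f_n : X \to \mathbb{R}$ be subadditive functions such that $0 \le \max(f_1(x), \dots, f_n(x))$ for all $x \in X$. Then there exist $\lambda_1, \dots, \lambda_n \ge 0$ with $\lambda_1 + \cdots + \lambda_n = 1$ such that $0 \le \lambda_1 f_1(x) + \cdots + \lambda_n f_n(x)$ for all $x \in X$. -/
theorem subadd_multiple {X : Type*} [AddCommSemigroup X] {n : ℕ} (f : Fin n → X → ℝ)
    (hsub : ∀ i, ∀ x y : X, f i (x + y) ≤ f i x + f i y) (m : ℕ) (hm : 0 < m) (x : X) :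
    ∃ y, ∀ i, f i y ≤ m * f i x := by
  induction m, hm using Nat.le_induction with
  | base => exact ⟨x, fun i => by simp⟩
  | succ k hk ih =>
    obtain ⟨y, hy⟩ := ih
    refine ⟨y + x, fun i => ?_⟩
    push_cast
    linarith [hy i, hsub i y x]

/-- The cone generated by the values. -/
def subaddCone {X : Type*} {n : ℕ} (f : Fin n → X → ℝ) : Set (Fin n → ℝ) :=
  {v | ∃ x, ∃ m : ℕ, 0 < m ∧ ∀ i, f i x ≤ m * v i}

theorem subaddCone_add {X : Type*} [AddCommSemigroup X] {n : ℕ} (f : Fin n → X → ℝ)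
    (hsub : ∀ i, ∀ x y : X, f i (x + y) ≤ f i x + f i y) (v w : Fin n → ℝ)
    (hv : v ∈ subaddCone f) (hw : w ∈ subaddCone f) : v + w ∈ subaddCone f := by
  obtain ⟨x, m, hm, hx⟩ := hv
  obtain ⟨y, k, hk, hy⟩ := hw
  obtain ⟨x', hx'⟩ := subadd_multiple f hsub k hk x
  obtain ⟨y', hy'⟩ := subadd_multiple f hsub m hm y
  refine ⟨x' + y', m * k, by positivity, fun i => ?_⟩
  have h1 : (k : ℝ) * f i x ≤ k * (m * v i) := mul_le_mul_of_nonneg_left (hx i) (by positivity)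
  have h2 : (m : ℝ) * f i y ≤ m * (k * w i) := mul_le_mul_of_nonneg_left (hy i) (by positivity)
  have := hsub i x' y'
  have := hx' i
  have := hy' i
  push_cast
  simp only [Pi.add_apply]
  nlinarith

theorem subaddCone_smul {X : Type*} [AddCommSemigroup X] {n : ℕ} (f : Fin n → X → ℝ)
    (hsub : ∀ i, ∀ x y : X, f i (x + y) ≤ f i x + f i y) (v : Fin n → ℝ)
    (hv : v ∈ subaddCone f) (p q : ℕ) (hp : 0 < p) (hq : 0 < q) :
    ((p : ℝ) / q) • v ∈ subaddCone f := by
  obtain ⟨x, m, hm, hx⟩ := hv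
  obtain ⟨x', hx'⟩ := subadd_multiple f hsub p hp x
  refine ⟨x', m * q, by positivity, fun i => ?_⟩
  have h1 : (p : ℝ) * f i x ≤ p * (m * v i) := mul_le_mul_of_nonneg_left (hx i) (by positivity)
  have h2 : ((m * q : ℕ) : ℝ) * (((p : ℝ) / q) • v) i = p * (m * v i) := by
    have : (q : ℝ) ≠ 0 := by positivity
    simp only [Pi.smul_apply, smul_eq_mul]
    push_cast
    field_simp
  rw [h2]
  exact (hx' i).trans h1

theorem subaddCone_convex {X : Type*} [AddCommSemigroup X] {n : ℕ} (f : Fin n → X → ℝ)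
    (hsub : ∀ i, ∀ x y : X, f i (x + y) ≤ f i x + f i y) :
    Convex ℝ (closure (subaddCone f)) := by
  have key : ∀ a : ℝ, 0 < a → ∀ v ∈ closure (subaddCone f), a • v ∈ closure (subaddCone f) := by
    intro a ha v hv
    rw [← closure_closure (s := subaddCone f)]
    refine map_mem_closure (f := fun w : Fin n → ℝ => a • w) (by fun_prop) hv ?_
    intro w hw
    have ht : Filter.Tendsto (fun k : ℕ => ((⌈a * (k : ℝ)⌉₊ : ℝ) / (k : ℝ)) • w) Filter.atTop
        (nhds (a • w)) :=
      ((tendsto_nat_ceil_mul_div_atTop ha.le).comp tendsto_natCast_atTop_atTop).smul_const w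
    refine mem_closure_of_tendsto ht ?_
    filter_upwards [Filter.eventually_gt_atTop 0] with k hk
    exact subaddCone_smul f hsub w hw _ k (Nat.ceil_pos.2 (by positivity)) hk
  rw [convex_iff_forall_pos]
  intro v hv w hw a b ha hb _
  exact map_mem_closure₂ continuous_add (key a ha v hv) (key b hb w hw)
    (fun v hv w hw => subaddCone_add f hsub v w hv hw)

/-- Maximum Theorem for subadditive functions on an Abelian semigroup. -/
theorem maximum_theorem_subadditive
    {X : Type*} [AddCommSemigroup X]
    {n : ℕ} (hn : 0 < n) (f : Fin n → X → ℝ)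
    (hsub : ∀ i, ∀ x y : X, f i (x + y) ≤ f i x + f i y)
    (hmax : ∀ x : X, 0 ≤ Finset.univ.sup' ⟨⟨0, hn⟩, Finset.mem_univ _⟩ fun i => f i x) :
    ∃ lam : Fin n → ℝ, (∀ i, 0 ≤ lam i) ∧ (∑ i, lam i = 1) ∧
      ∀ x : X, 0 ≤ ∑ i, lam i * f i x := by
  rcases isEmpty_or_nonempty X with hX | ⟨⟨x₀⟩⟩
  · refine ⟨Pi.single ⟨0, hn⟩ 1, fun i => ?_, by simp, fun x => (hX.false x).elim⟩
    by_cases h : i = ⟨0, hn⟩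
    · subst h; simp
    · simp [h]
  have hNo : IsOpen (Set.univ.pi fun _ : Fin n => Set.Iio (0 : ℝ)) :=
    isOpen_set_pi Set.finite_univ fun _ _ => isOpen_Iio
  have hNc : Convex ℝ (Set.univ.pi fun _ : Fin n => Set.Iio (0 : ℝ)) :=
    convex_pi fun _ _ => convex_Iio 0
  have hdisj : Disjoint (Set.univ.pi fun _ : Fin n => Set.Iio (0 : ℝ)) (subaddCone f) := by
    rw [Set.disjoint_left]
    rintro v hv ⟨x, m, hm, hx⟩
    obtain ⟨i, -, hi⟩ := (Finset.le_sup'_iff _).1 (hmax x)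
    have h1 : v i < 0 := hv i trivial
    have h2 : (m : ℝ) * v i < 0 := mul_neg_of_pos_of_neg (by positivity) h1
    linarith [hx i]
  obtain ⟨g, u, hg1, hg2⟩ := geometric_hahn_banach_open hNc hNo (subaddCone_convex f hsub)
    (hdisj.closure_right hNo)
  have hgv : ∀ v : Fin n → ℝ, g v = ∑ i, g (Pi.single i 1) * v i := by
    intro v
    conv_lhs => rw [pi_eq_sum_univ' v]
    rw [map_sum]
    refine Finset.sum_congr rfl fun i _ => ?_
    rw [map_smul, smul_eq_mul, mul_comm]
  have hmem : ∀ x, (fun i => f i x) ∈ subaddCone f := fun x => ⟨x, 1, one_pos, fun i => by simp⟩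
  have hpos : ∀ i, 0 ≤ g (Pi.single i 1) := by
    intro i
    by_contra! hneg
    have ht : ∀ t : ℝ, 0 ≤ t → u ≤ g (fun i => f i x₀) + t * g (Pi.single i 1) := by
      intro t ht
      have := hg2 ((fun i => f i x₀) + t • Pi.single i 1) (subset_closure
        ⟨x₀, 1, one_pos, fun j => by
          have : 0 ≤ (Pi.single i 1 : Fin n → ℝ) j := by
            rw [Pi.single_apply]; split_ifs <;> norm_num
          have := mul_nonneg ht this
          simp only [Nat.cast_one, one_mul, Pi.add_apply, Pi.smul_apply, smul_eq_mul]
          linarith⟩)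
      rwa [map_add, map_smul, smul_eq_mul] at this
    have h0 := ht 0 le_rfl
    have h1 := ht ((g (fun i => f i x₀) - u + 1) / (- g (Pi.single i 1)))
      (div_nonneg (by linarith) (by linarith))
    have h2 : (g (fun i => f i x₀) - u + 1) / (- g (Pi.single i 1)) * g (Pi.single i 1)
        = -(g (fun i => f i x₀) - u + 1) := by
      have := hneg.ne
      field_simp
    linarith
  set σ := ∑ i, g (Pi.single i 1) with hσ
  have hσ0 : 0 ≤ σ := Finset.sum_nonneg fun i _ => hpos i
  have hlow : ∀ e : ℝ, 0 < e → - (e * σ) < u := by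
    intro e he
    have := hg1 (fun _ => -e) (fun i _ => by simpa using he)
    rw [hgv, ← Finset.sum_mul] at this
    linarith
  have hu : 0 ≤ u := by
    by_contra! hu
    have := hlow (-u / (σ + 1)) (div_pos (by linarith) (by linarith))
    have h3 : -u / (σ + 1) * σ ≤ -u := by
      rw [div_mul_eq_mul_div, div_le_iff₀ (by linarith)]
      nlinarith
    linarith
  have hnn : ∀ x, 0 ≤ ∑ i, g (Pi.single i 1) * f i x := by
    intro x
    have := hg2 _ (subset_closure (hmem x))
    rw [hgv] at this
    linarith
  have hσpos : 0 < σ := by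
    refine lt_of_le_of_ne hσ0 fun h => ?_
    have hz := (Finset.sum_eq_zero_iff_of_nonneg fun i _ => hpos i).1 h.symm
    have h1 := hlow 1 one_pos
    have h2 := hg2 _ (subset_closure (hmem x₀))
    rw [hgv, Finset.sum_eq_zero fun i hi => by rw [hz i hi, zero_mul]] at h2
    rw [← h] at h1
    linarith
  refine ⟨fun i => g (Pi.single i 1) / σ, fun i => div_nonneg (hpos i) hσ0, ?_, fun x => ?_⟩
  · rw [← Finset.sum_div, ← hσ, div_self hσpos.ne']
  · have : ∑ i, g (Pi.single i 1) / σ * f i x = (∑ i, g (Pi.single i 1) * f i x) / σ := by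
      rw [Finset.sum_div]
      exact Finset.sum_congr rfl fun i _ => by ring
    rw [this]
    exact div_nonneg (hnn x) hσ0
end

section
/- Let $X$ be a nonempty set and $f_1, \dots, f_n : X \to \mathbb{R}$ arbitrary functions. Then there exists $(\lambda_1, \dots, \lambda_n) \in S_n$ such that $0 \le \lambda_1 f_1(x) + \cdots + \lambda_n f_n(x)$ for all $x \in X$ if and only if $0 \le \max_{i \in \{1,\dots,n\}} \big( t_1 f_i(x_1) + \cdots + t_n f_i(x_n) \big)$ for all $x_1, \dots, x_n \in X$ and all $(t_1, \dots, t_n) \in S_n$. -/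
open Finset in
/-- Finite alternative: via Hahn-Banach separation from the open negative orthant. -/
theorem finite_alternative {n : ℕ} (hn : 0 < n) (A : Matrix (Fin n) (Fin n) ℝ)
    (h : ∀ t : Fin n → ℝ, (∀ j, 0 ≤ t j) → ∑ j, t j = 1 → ∃ i, 0 ≤ ∑ j, t j * A i j) :
    ∃ lam : Fin n → ℝ, (∀ i, 0 ≤ lam i) ∧ (∑ i, lam i = 1) ∧ ∀ j, 0 ≤ ∑ i, lam i * A i j := by
  classical
  let s : Set (Fin n → ℝ) := Set.univ.pi fun _ => Set.Iio 0
  let T : Set (Fin n → ℝ) := Set.image A.mulVecLin (stdSimplex ℝ (Fin n))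
  have hs : Convex ℝ s := convex_pi fun _ _ => convex_Iio 0
  have hso : IsOpen s := isOpen_set_pi Set.finite_univ fun _ _ => isOpen_Iio
  have hT : Convex ℝ T := (convex_stdSimplex ℝ (Fin n)).linear_image _
  have hd : Disjoint s T := by
    rw [Set.disjoint_left]
    rintro v hv ⟨t, ht, rfl⟩
    obtain ⟨i, hi⟩ := h t ht.1 ht.2
    have h1 : (A.mulVecLin t) i < 0 := hv i (Set.mem_univ i)
    simp only [Matrix.mulVecLin_apply, Matrix.mulVec, dotProduct] at h1
    simp only [mul_comm (A i _)] at h1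
    linarith
  obtain ⟨g, u, hg1, hg2⟩ := geometric_hahn_banach_open hs hso hT hd
  have hg : ∀ v : Fin n → ℝ, g v = ∑ i, v i * g (Pi.single i 1) := by
    intro v
    conv_lhs => rw [pi_eq_sum_univ' v]
    simp [map_sum, map_smul]
  have hcol : ∀ j, u ≤ g (fun i => A i j) := by
    intro j
    apply hg2
    refine ⟨Pi.single j 1, single_mem_stdSimplex ℝ j, ?_⟩
    simp [Matrix.col_def]
    try rfl
  set w : Fin n → ℝ := fun i => g (Pi.single i 1) with hw
  have hu : 0 ≤ u := by
    by_contra hu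
    push Not at hu
    have h1 : ∀ ε : ℝ, 0 < ε → -ε * ∑ i, w i < u := by
      intro ε hε
      have := hg1 (fun _ => -ε) (fun i _ => by simpa using hε)
      rw [hg, ← Finset.mul_sum] at this
      exact this
    have hS : 0 < ∑ i, w i := by
      have := h1 1 one_pos
      linarith
    have := h1 (-u / (2 * ∑ i, w i)) (by apply div_pos <;> linarith)
    have e : -(-u / (2 * ∑ i, w i)) * ∑ i, w i = u / 2 := by
      field_simp
    linarith
  have hwn : ∀ i, 0 ≤ w i := by
    intro i
    by_contra hi
    push Not at hi
    have h1 : ∀ K : ℝ, 0 ≤ K → -(∑ k, w k) - K * w i < u := by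
      intro K hK
      have := hg1 (fun k => -1 - K * (Pi.single i 1 : Fin n → ℝ) k) (fun k _ => by
        have : (0:ℝ) ≤ (Pi.single i 1 : Fin n → ℝ) k := by
          by_cases hk : k = i
          · subst hk; simp
          · simp [hk]
        have := mul_nonneg hK this
        simp only [Set.mem_Iio]
        linarith)
      rw [hg] at this
      have e : ∑ k, (-1 - K * (Pi.single i 1 : Fin n → ℝ) k) * w k
          = -(∑ k, w k) - K * w i := by
        simp [sub_mul, Finset.sum_sub_distrib, Pi.single_apply]
      rw [← e]; exact this
    have h2 := h1 ((|u| + |∑ k, w k|) / (-w i)) (by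
      apply div_nonneg (by positivity); linarith)
    have e : (|u| + |∑ k, w k|) / (-w i) * w i = -(|u| + |∑ k, w k|) := by
      rw [div_neg, neg_mul, div_mul_cancel₀ _ hi.ne]
    rw [e] at h2
    have := le_abs_self u
    have := le_abs_self (∑ k, w k)
    linarith
  have hS : 0 < ∑ i, w i := by
    have a := hg1 (fun _ => -1) (fun i _ => by simp)
    have b := hcol ⟨0, hn⟩
    rw [hg] at a b
    rcases (Finset.sum_nonneg fun i (_ : i ∈ univ) => hwn i).lt_or_eq with h0 | h0
    · exact h0
    · have hz := (Finset.sum_eq_zero_iff_of_nonneg fun i (_ : i ∈ univ) => hwn i).1 h0.symm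
      have hz' : ∀ i, g (Pi.single i 1) = 0 := fun i => hz i (mem_univ i)
      simp [hz'] at a b
      linarith
  refine ⟨fun i => w i / ∑ k, w k, fun i => div_nonneg (hwn i) hS.le, ?_, fun j => ?_⟩
  · rw [← Finset.sum_div, div_self hS.ne']
  · have e : ∑ i, w i / (∑ k, w k) * A i j = (∑ i, A i j * w i) / ∑ k, w k := by
      rw [Finset.sum_div]
      exact Finset.sum_congr rfl fun i _ => by ring
    rw [e]
    have b := hcol j
    rw [hg] at b
    exact div_nonneg (hu.trans b) hS.le

theorem exists_enum {X : Type*} [Nonempty X] {n : ℕ} (I : Finset X) (h : I.card ≤ n) :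
    ∃ x : Fin n → X, ∀ a ∈ I, ∃ j, x j = a := by
  classical
  refine ⟨fun j => if hj : (j : ℕ) < I.card then (I.equivFin.symm ⟨j, hj⟩).1
    else Classical.arbitrary X, fun a ha => ?_⟩
  refine ⟨⟨I.equivFin ⟨a, ha⟩, lt_of_lt_of_le (I.equivFin ⟨a, ha⟩).2 h⟩, ?_⟩
  simp

/-- Characterization of the existence of a nonnegative convex combination of finitely
many functions. -/
theorem nonneg_convex_combination_iff
    {X : Type*} [Nonempty X] {n : ℕ} (hn : 0 < n) (f : Fin n → X → ℝ) :
    (∃ lam : Fin n → ℝ, (∀ i, 0 ≤ lam i) ∧ (∑ i, lam i = 1) ∧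
        ∀ x : X, 0 ≤ ∑ i, lam i * f i x) ↔
      (∀ (x : Fin n → X) (t : Fin n → ℝ), (∀ j, 0 ≤ t j) → (∑ j, t j = 1) →
        0 ≤ Finset.univ.sup' ⟨⟨0, hn⟩, Finset.mem_univ _⟩
          fun i => ∑ j, t j * f i (x j)) := by
  constructor
  · rintro ⟨lam, h0, h1, h⟩ x t ht0 ht1
    by_contra hc
    push Not at hc
    replace hc := (Finset.sup'_lt_iff _).1 hc
    have hpos : 0 ≤ ∑ i, lam i * ∑ j, t j * f i (x j) := by
      have e : ∑ i, lam i * ∑ j, t j * f i (x j) = ∑ j, t j * ∑ i, lam i * f i (x j) := by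
        simp only [Finset.mul_sum]
        rw [Finset.sum_comm]
        exact Finset.sum_congr rfl fun j _ => Finset.sum_congr rfl fun i _ => by ring
      rw [e]
      exact Finset.sum_nonneg fun j _ => mul_nonneg (ht0 j) (h (x j))
    have hle : ∀ i ∈ Finset.univ, lam i * ∑ j, t j * f i (x j) ≤ 0 := fun i hi =>
      mul_nonpos_of_nonneg_of_nonpos (h0 i) (hc i hi).le
    have hz := (Finset.sum_eq_zero_iff_of_nonpos hle).1
      (le_antisymm (Finset.sum_nonpos hle) hpos)
    have hl : ∀ i, lam i = 0 := fun i =>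
      (mul_eq_zero.1 (hz i (Finset.mem_univ i))).resolve_right (hc i (Finset.mem_univ i)).ne
    simp [hl] at h1
  · intro h
    obtain ⟨m, rfl⟩ : ∃ m, n = m + 1 := ⟨n - 1, by omega⟩
    let K : X → Set (Fin m → ℝ) := fun x => {μ | (∀ i, 0 ≤ μ i) ∧ ∑ i, μ i ≤ 1 ∧
      0 ≤ (1 - ∑ i, μ i) * f 0 x + ∑ i, μ i * f (Fin.succ i) x}
    have hconv : ∀ x, Convex ℝ (K x) := by
      rintro x a ⟨a0, a1, a2⟩ b ⟨b0, b1, b2⟩ p q hp hq hpq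
      have e1 : ∑ i, (p • a + q • b) i = p * ∑ i, a i + q * ∑ i, b i := by
        simp [Finset.sum_add_distrib, Finset.mul_sum]
      have e2 : ∑ i, (p • a + q • b) i * f (Fin.succ i) x
          = p * ∑ i, a i * f (Fin.succ i) x + q * ∑ i, b i * f (Fin.succ i) x := by
        simp [Finset.sum_add_distrib, Finset.mul_sum, add_mul, mul_assoc]
      refine ⟨fun i => ?_, ?_, ?_⟩
      · exact add_nonneg (mul_nonneg hp (a0 i)) (mul_nonneg hq (b0 i))
      · rw [e1]
        nlinarith
      · rw [e1, e2]
        have := add_nonneg (mul_nonneg hp a2) (mul_nonneg hq b2)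
        obtain rfl : q = 1 - p := by linarith
        linarith
    have hcomp : ∀ x, IsCompact (K x) := by
      intro x
      refine (isCompact_Icc (a := (0 : Fin m → ℝ)) (b := 1)).of_isClosed_subset ?_ ?_
      · refine IsClosed.inter (s₁ := {μ : Fin m → ℝ | ∀ i, 0 ≤ μ i}) ?_
          (IsClosed.inter (s₁ := {μ : Fin m → ℝ | ∑ i, μ i ≤ 1})
          (s₂ := {μ : Fin m → ℝ | 0 ≤ (1 - ∑ i, μ i) * f 0 x + ∑ i, μ i * f (Fin.succ i) x}) ?_ ?_)
        · simp only [Set.ofPred_forall]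
          exact isClosed_iInter fun i => isClosed_le continuous_const (by fun_prop)
        · exact isClosed_le (by fun_prop) continuous_const
        · exact isClosed_le continuous_const (by fun_prop)
      · rintro μ ⟨h0, h1, -⟩
        exact ⟨h0, fun i => (Finset.single_le_sum (fun k _ => h0 k)
          (Finset.mem_univ i)).trans h1⟩
    have hne : (⋂ x, K x).Nonempty := by
      refine Convex.helly_theorem_compact' hconv hcomp ?_
      intro I hI
      rw [Module.finrank_fin_fun] at hI
      obtain ⟨x, hx⟩ := exists_enum I hI
      obtain ⟨lam, l0, l1, l2⟩ := finite_alternative hn (fun i j => f i (x j)) (by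
        intro t t0 t1
        have := h x t t0 t1
        obtain ⟨i, -, hi⟩ := (Finset.le_sup'_iff _).1 this
        exact ⟨i, hi⟩)
      refine ⟨fun i => lam i.succ, ?_⟩
      simp only [Set.mem_iInter]
      intro a ha
      obtain ⟨j, rfl⟩ := hx a ha
      have l3 := l2 j
      rw [Fin.sum_univ_succ] at l1 l3
      refine ⟨fun i => l0 _, by linarith [l0 0], ?_⟩
      have e : 1 - ∑ i : Fin m, lam i.succ = lam 0 := by linarith
      rw [e]
      exact l3
    obtain ⟨μ, hμ⟩ := hne
    rw [Set.mem_iInter] at hμ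
    refine ⟨Fin.cons (1 - ∑ i, μ i) μ, ?_, ?_, ?_⟩
    · obtain ⟨h0, h1, -⟩ := hμ (Classical.arbitrary X)
      intro i
      refine Fin.cases ?_ (fun i => ?_) i
      · simpa using h1
      · simpa using h0 i
    · simp [Fin.sum_univ_succ]
    · intro x
      simpa [Fin.sum_univ_succ] using (hμ x).2.2
end

section
/- Let $X$ be a nonempty set and $f, g : X \to \mathbb{R}$ arbitrary functions. Then there exists $\lambda \in [0,1]$ such that $0 \le \lambda f(x) + (1-\lambda) g(x)$ for all $x \in X$ if and only if $0 \le \max\big( t f(x) + (1-t) f(y),\ t g(x) + (1-t) g(y) \big)$ for all $x, y \in X$ and all $t \in [0,1]$. -/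
/-- Characterization of the existence of a nonnegative convex combination of two
functions. -/
theorem nonneg_convex_combination_iff_two
    {X : Type*} [Nonempty X] (f g : X → ℝ) :
    (∃ lam ∈ Set.Icc (0:ℝ) 1, ∀ x : X, 0 ≤ lam * f x + (1 - lam) * g x) ↔
      (∀ x y : X, ∀ t ∈ Set.Icc (0:ℝ) 1,
        0 ≤ max (t * f x + (1 - t) * f y) (t * g x + (1 - t) * g y)) := by
  constructor
  · rintro ⟨l, ⟨h0, h1⟩, h⟩ x y t ⟨t0, t1⟩
    by_contra hc
    rw [not_le, max_lt_iff] at hc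
    obtain ⟨ha, hb⟩ := hc
    have e1 := mul_nonneg t0 (h x)
    have e2 := mul_nonneg (sub_nonneg.2 t1) (h y)
    rcases h0.eq_or_lt with h0 | h0
    · subst h0
      linarith
    · have e3 := mul_neg_of_pos_of_neg h0 ha
      have e4 := mul_nonpos_of_nonneg_of_nonpos (sub_nonneg.2 h1) hb.le
      linarith
  · intro h
    have hm : ∀ x, 0 ≤ f x ∨ 0 ≤ g x := by
      intro x
      have := h x x 1 (by simp)
      simpa using this
    have key : ∀ x y, g x < 0 → f y < 0 → g x * f y ≤ g y * f x := by
      intro x y hx hy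
      have hfx : 0 ≤ f x := (hm x).resolve_right (not_le.2 hx)
      have hgy : 0 ≤ g y := (hm y).resolve_left (not_le.2 hy)
      by_contra! hc
      have hD : 0 < g y - f y + f x - g x := by linarith
      have := h x y ((g y - f y) / (g y - f y + f x - g x))
        ⟨div_nonneg (by linarith) hD.le, (div_le_one hD).2 (by linarith)⟩
      have e1 : (g y - f y) / (g y - f y + f x - g x) * f x
          + (1 - (g y - f y) / (g y - f y + f x - g x)) * f y
          = (g y * f x - g x * f y) / (g y - f y + f x - g x) := by
        field_simp
        ring
      have e2 : (g y - f y) / (g y - f y + f x - g x) * g x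
          + (1 - (g y - f y) / (g y - f y + f x - g x)) * g y
          = (g y * f x - g x * f y) / (g y - f y + f x - g x) := by
        field_simp
        ring
      rw [e1, e2, max_self] at this
      exact absurd this (not_le.2 (div_neg_of_neg_of_pos (by linarith) hD))
    let l : X → ℝ := fun x => if g x < 0 then -g x / (f x - g x) else 0
    let u : X → ℝ := fun x => if f x < 0 then g x / (g x - f x) else 1
    have hl0 : ∀ x, 0 ≤ l x := by
      intro x
      simp only [l]
      split_ifs with hx
      · have hfx : 0 ≤ f x := (hm x).resolve_right (not_le.2 hx)
        exact div_nonneg (by linarith) (by linarith)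
      · exact le_rfl
    have hu1 : ∀ x, u x ≤ 1 := by
      intro x
      simp only [u]
      split_ifs with hx
      · have hgx : 0 ≤ g x := (hm x).resolve_left (not_le.2 hx)
        exact (div_le_one (by linarith)).2 (by linarith)
      · exact le_rfl
    have hlu : ∀ x y, l x ≤ u y := by
      intro x y
      simp only [l, u]
      split_ifs with hx hy hy
      · have hfx : 0 ≤ f x := (hm x).resolve_right (not_le.2 hx)
        have hgy : 0 ≤ g y := (hm y).resolve_left (not_le.2 hy)
        rw [div_le_div_iff₀ (by linarith) (by linarith)]
        linarith [key x y hx hy]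
      · have hfx : 0 ≤ f x := (hm x).resolve_right (not_le.2 hx)
        exact (div_le_one (by linarith)).2 (by linarith)
      · have hgy : 0 ≤ g y := (hm y).resolve_left (not_le.2 hy)
        exact div_nonneg hgy (by linarith)
      · exact zero_le_one
    obtain ⟨x0⟩ := ‹Nonempty X›
    haveI : Nonempty X := ⟨x0⟩
    have hbd : BddAbove (Set.range l) := ⟨u x0, by rintro _ ⟨x, rfl⟩; exact hlu x x0⟩
    have hL : ∀ x, l x ≤ ⨆ x, l x := fun x => le_ciSup hbd x
    have hU : ∀ y, (⨆ x, l x) ≤ u y := fun y => ciSup_le fun x => hlu x y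
    generalize (⨆ x, l x) = s at hL hU
    have s0 : 0 ≤ s := (hl0 x0).trans (hL x0)
    have s1 : s ≤ 1 := (hU x0).trans (hu1 x0)
    refine ⟨s, ⟨s0, s1⟩, fun x => ?_⟩
    by_cases hx : g x < 0
    · have hfx : 0 ≤ f x := (hm x).resolve_right (not_le.2 hx)
      have := hL x
      simp only [l, if_pos hx] at this
      rw [div_le_iff₀ (by linarith)] at this
      linarith
    · by_cases hy : f x < 0
      · have := hU x
        simp only [u, if_pos hy] at this
        rw [le_div_iff₀ (by linarith)] at this
        linarith
      · exact add_nonneg (mul_nonneg s0 (not_lt.1 hy))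
          (mul_nonneg (by linarith) (not_lt.1 hx))
end

section
/- Let $X$ be a nonempty set, $\circ : X \times X \to X$ a binary operation, and $p, q > 0$ constants. Define $S \subseteq [0,1]$ as the set of all numbers of the form $\frac{a}{a+b}$ with $a, b > 0$ for which there exists a binary operation $* : X \times X \to X$ such that every $(\circ, p, q)$-convex function $f : X \to \mathbb{R}$ is $(*, a, b)$-convex. Then: (i) $\frac{p}{p+q} \in S$; (ii) $1 - S \subseteq S$, i.e., if $s \in S$ then $1 - s \in S$; (iii) $S$ is closed under multiplication, i.e., if $s, t \in S$ then $s t \in S$; and (iv) $S$ is dense in $[0,1]$. -/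
/-- A function `f : X → ℝ` is `(op, p, q)`-convex if `f (op x y) ≤ p * f x + q * f y`
for all `x, y`. -/
def PQConvex {X : Type*} (op : X → X → X) (p q : ℝ) (f : X → ℝ) : Prop :=
  ∀ x y : X, f (op x y) ≤ p * f x + q * f y

/-- The set `S` of ratios `a / (a + b)` for which some binary operation `*` makes every
`(∘, p, q)`-convex function `(*, a, b)`-convex contains `p / (p + q)`, satisfies
`1 - S ⊆ S`, is closed under multiplication, and is dense in `[0, 1]`. -/
theorem ratio_set_properties
    {X : Type*} [Nonempty X] (circ : X → X → X) {p q : ℝ} (hp : 0 < p) (hq : 0 < q) :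
    let S : Set ℝ := {s | ∃ a b : ℝ, 0 < a ∧ 0 < b ∧ s = a / (a + b) ∧
      ∃ star : X → X → X, ∀ f : X → ℝ, PQConvex circ p q f → PQConvex star a b f}
    (p / (p + q) ∈ S) ∧ (∀ s ∈ S, 1 - s ∈ S) ∧ (∀ s ∈ S, ∀ t ∈ S, s * t ∈ S) ∧
      (∀ x ∈ Set.Icc (0:ℝ) 1, x ∈ closure S) := by
  intro S
  have h1 : p / (p + q) ∈ S := ⟨p, q, hp, hq, rfl, circ, fun f hf => hf⟩
  have h2 : ∀ s ∈ S, 1 - s ∈ S := by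
    rintro s ⟨a, b, ha, hb, rfl, star, h⟩
    refine ⟨b, a, hb, ha, ?_, fun x y => star y x, fun f hf x y => ?_⟩
    · field_simp
      ring
    · have := h f hf y x
      linarith
  have h3 : ∀ s ∈ S, ∀ t ∈ S, s * t ∈ S := by
    rintro s ⟨a, b, ha, hb, rfl, star, h⟩ t ⟨c, d, hc, hd, rfl, dia, k⟩
    refine ⟨a * c, a * d + b * c + b * d, by positivity, by positivity, ?_,
      fun x y => star (dia x y) (dia y y), fun f hf x y => ?_⟩
    · rw [div_mul_div_comm]
      congr 1
      ring
    · have e1 := h f hf (dia x y) (dia y y)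
      have e2 := mul_le_mul_of_nonneg_left (k f hf x y) ha.le
      have e3 := mul_le_mul_of_nonneg_left (k f hf y y) hb.le
      dsimp only
      linarith
  have hpow : ∀ s ∈ S, ∀ n : ℕ, s ^ (n + 1) ∈ S := by
    intro s hs n
    induction n with
    | zero => simpa using hs
    | succ n ih => rw [pow_succ]; exact h3 _ ih _ hs
  refine ⟨h1, h2, h3, ?_⟩
  rintro x ⟨hx0, hx1⟩
  rw [Metric.mem_closure_iff]
  intro ε hε
  have hs0 : 0 < p / (p + q) := by positivity
  have hs1 : p / (p + q) < 1 := by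
    rw [div_lt_one (by positivity)]
    linarith
  generalize p / (p + q) = s at h1 hs0 hs1
  obtain ⟨n, hn⟩ := exists_pow_lt_of_lt_one hε hs1
  have hn' : s ^ (n + 1) < ε :=
    (pow_le_pow_of_le_one hs0.le hs1.le (Nat.le_succ n)).trans_lt hn
  have hr0 : 0 < s ^ (n + 1) := by positivity
  have hr1 : s ^ (n + 1) < 1 := pow_lt_one₀ hs0.le hs1 (Nat.succ_ne_zero n)
  have hrS := hpow s h1 n
  generalize s ^ (n + 1) = r at hn' hr0 hr1 hrS
  rcases hx0.eq_or_lt with rfl | hx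
  · refine ⟨r, hrS, ?_⟩
    rw [Real.dist_eq, abs_lt]
    constructor <;> linarith
  · obtain ⟨m, hm1, hm2⟩ := exists_nat_pow_near_of_lt_one hx hx1
      (show 0 < 1 - r by linarith) (show 1 - r < 1 by linarith)
    refine ⟨(1 - r) ^ (m + 1), hpow _ (h2 _ hrS) m, ?_⟩
    have hle : (1 - r) ^ m ≤ 1 := pow_le_one₀ (by linarith) (by linarith)
    rw [Real.dist_eq, abs_lt]
    rw [pow_succ] at *
    constructor <;> nlinarith
end

section
/- Let $X$ be a nonempty set, $\circ : X \times X \to X$ a binary operation, and $p, q > 0$ constants. Define $S \subseteq [0,1]$ as the set of all numbers of the form $\frac{a}{a+b}$ with $a, b > 0$ for which there exists a binary operation $* : X \times X \to X$ such that every $(\circ, p, q)$-convex function $f : X \to \mathbb{R}$ is $(*, a, b)$-convex. If $s \in S$ and $n \in \mathbb{N}$ with $n \ge 1$, then $s^n \in S$. -/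
theorem diag_tree {X : Type*} (F : Set (X → ℝ)) {a b : ℝ} (ha : 0 < a) (hb : 0 < b)
    (star : X → X → X) (h : ∀ f ∈ F, PQConvex star a b f) (n : ℕ) :
    ∃ d : X → X, ∀ f ∈ F, ∀ y, f (d y) ≤ (a + b) ^ n * f y := by
  induction n with
  | zero => exact ⟨id, fun f _ y => by simp⟩
  | succ k ih =>
    obtain ⟨d, hd⟩ := ih
    refine ⟨fun y => star (d y) (d y), fun f hf y => ?_⟩
    have h1 := h f hf (d y) (d y)
    have h2 := mul_le_mul_of_nonneg_left (hd f hf y) (add_pos ha hb).le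
    rw [pow_succ]
    linarith

theorem power_tree {X : Type*} (F : Set (X → ℝ)) {a b : ℝ} (ha : 0 < a) (hb : 0 < b)
    (star : X → X → X) (h : ∀ f ∈ F, PQConvex star a b f) (n : ℕ) :
    ∃ t : X → X → X, ∀ f ∈ F, PQConvex t (a ^ n) ((a + b) ^ n - a ^ n) f := by
  induction n with
  | zero => exact ⟨fun x _ => x, fun f _ x y => by simp⟩
  | succ k ih =>
    obtain ⟨t, ht⟩ := ih
    obtain ⟨d, hd⟩ := diag_tree F ha hb star h k
    refine ⟨fun x y => star (t x y) (d y), fun f hf x y => ?_⟩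
    have h1 := h f hf (t x y) (d y)
    have h2 := mul_le_mul_of_nonneg_left (hd f hf y) hb.le
    have h3 := mul_le_mul_of_nonneg_left (ht f hf x y) ha.le
    rw [pow_succ, pow_succ]
    linarith

/-- The set `S` of ratios `a / (a + b)` for which some binary operation `*` makes every
`(∘, p, q)`-convex function `(*, a, b)`-convex is closed under taking positive powers. -/
theorem ratio_set_pow
    {X : Type*} [Nonempty X] (circ : X → X → X) {p q : ℝ} (hp : 0 < p) (hq : 0 < q)
    {s : ℝ}
    (hs : s ∈ {s | ∃ a b : ℝ, 0 < a ∧ 0 < b ∧ s = a / (a + b) ∧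
      ∃ star : X → X → X, ∀ f : X → ℝ, PQConvex circ p q f → PQConvex star a b f})
    {n : ℕ} (hn : 1 ≤ n) :
    s ^ n ∈ {s | ∃ a b : ℝ, 0 < a ∧ 0 < b ∧ s = a / (a + b) ∧
      ∃ star : X → X → X, ∀ f : X → ℝ, PQConvex circ p q f → PQConvex star a b f} := by
  obtain ⟨a, b, ha, hb, rfl, star, h⟩ := hs
  obtain ⟨t, ht⟩ := power_tree {f | PQConvex circ p q f} ha hb star h n
  refine ⟨a ^ n, (a + b) ^ n - a ^ n, pow_pos ha n, ?_, ?_, t, ht⟩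
  · exact sub_pos.2 (pow_lt_pow_left₀ (by linarith) ha.le (by omega))
  · rw [div_pow, add_sub_cancel]
end

section
/- Let $X$ be a nonempty set, $\circ : X \times X \to X$ a binary operation, and $p, q > 0$ constants. If $f, g : X \to \mathbb{R}$ are $(\circ, p, q)$-convex functions satisfying $0 \le \max(f(x), g(x))$ for all $x \in X$, then there exists $\lambda \in [0,1]$ such that $0 \le \lambda f(x) + (1-\lambda) g(x)$ for all $x \in X$. -/
lemma pq_key {X : Type*} (circ : X → X → X) {p q : ℝ} (hp : 0 < p) (hq : 0 < q)
    {f g : X → ℝ} (hf : PQConvex circ p q f) (hg : PQConvex circ p q g)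
    (hmax : ∀ x : X, 0 ≤ max (f x) (g x)) (a b : X) (ha : f a < 0) (hb : g b < 0) :
    f a * g b ≤ g a * f b := by
  have hga : 0 ≤ g a := by
    rcases le_max_iff.1 (hmax a) with h | h
    · linarith
    · exact h
  have hfb : 0 ≤ f b := by
    rcases le_max_iff.1 (hmax b) with h | h
    · exact h
    · linarith
  by_contra! hlt
  have hd1 : 0 < f b - f a := by linarith
  have hd2 : 0 < g a - g b := by linarith
  obtain ⟨α, hα⟩ : ∃ α, α = g a / (g a - g b) := ⟨_, rfl⟩
  obtain ⟨β, hβ⟩ : ∃ β, β = -f a / (f b - f a) := ⟨_, rfl⟩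
  have hαβ : α < β := by
    rw [hα, hβ, div_lt_div_iff₀ hd2 hd1]; nlinarith
  have hα0 : 0 ≤ α := by rw [hα]; positivity
  have hβ1 : β ≤ 1 := by rw [hβ, div_le_one hd1]; linarith
  have hfneg : ∀ t, t < β → (1 - t) * f a + t * f b < 0 := by
    intro t ht
    rw [hβ, lt_div_iff₀ hd1] at ht; linarith
  have hgneg : ∀ t, α < t → (1 - t) * g a + t * g b < 0 := by
    intro t ht
    rw [hα, div_lt_iff₀ hd2] at ht; linarith
  have hk : 0 < p + q := by linarith
  obtain ⟨r, hr⟩ : ∃ r, r = max (p / (p + q)) (q / (p + q)) := ⟨_, rfl⟩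
  have hrp : p / (p + q) ≤ r := hr ▸ le_max_left _ _
  have hrq : q / (p + q) ≤ r := hr ▸ le_max_right _ _
  have hr0 : 0 ≤ r := le_trans (by positivity) hrp
  have hr1 : r < 1 := by
    rw [hr, max_lt_iff, div_lt_one hk, div_lt_one hk]; constructor <;> linarith
  have main : ∀ n : ℕ, ∃ K s t : ℝ, ∃ x y : X, 0 < K ∧ s ≤ α ∧ β ≤ t ∧ t - s ≤ r ^ n ∧
      f x ≤ K * ((1 - s) * f a + s * f b) ∧ g x ≤ K * ((1 - s) * g a + s * g b) ∧
      f y ≤ K * ((1 - t) * f a + t * f b) ∧ g y ≤ K * ((1 - t) * g a + t * g b) := by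
    intro n
    induction n with
    | zero => exact ⟨1, 0, 1, a, b, by norm_num, hα0, hβ1, by norm_num, by simp, by simp,
        by simp, by simp⟩
    | succ n ih =>
      obtain ⟨K, s, t, x, y, hK, hs, ht, hst, h1, h2, h3, h4⟩ := ih
      have hst0 : 0 ≤ t - s := by linarith
      obtain ⟨c, hc⟩ : ∃ c, c = p / (p + q) * s + q / (p + q) * t := ⟨_, rfl⟩
      have hpq : p / (p + q) + q / (p + q) = 1 := by field_simp
      have hc' : (p + q) * c = p * s + q * t := by rw [hc]; field_simp
      have comb : ∀ (h : X → ℝ), PQConvex circ p q h → ∀ (u v w : ℝ) (z z' : X),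
          (p + q) * w = p * u + q * v →
          h z ≤ K * ((1 - u) * h a + u * h b) → h z' ≤ K * ((1 - v) * h a + v * h b) →
          h (circ z z') ≤ (p + q) * K * ((1 - w) * h a + w * h b) := by
        intro h hh u v w z z' hw e1 e2
        have e3 := mul_le_mul_of_nonneg_left e1 hp.le
        have e4 := mul_le_mul_of_nonneg_left e2 hq.le
        have e5 : (p + q) * K * ((1 - w) * h a + w * h b)
          = p * (K * ((1 - u) * h a + u * h b)) + q * (K * ((1 - v) * h a + v * h b)) := by
          linear_combination K * (h b - h a) * hw
        linarith [hh z z']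
      have cf := comb f hf s t c x y hc' h1 h3
      have cg := comb g hg s t c x y hc' h2 h4
      have hkK : 0 < (p + q) * K := by positivity
      by_cases hcα : c ≤ α
      · refine ⟨(p + q) * K, c, t, circ x y, circ y y, hkK, hcα, ht, ?_, cf, cg,
          comb f hf t t t y y (by ring) h3 h3, comb g hg t t t y y (by ring) h4 h4⟩
        have : t - c = p / (p + q) * (t - s) := by rw [hc]; linear_combination (-t) * hpq
        rw [this, pow_succ']
        exact mul_le_mul hrp hst hst0 hr0
      by_cases hcβ : β ≤ c
      · refine ⟨(p + q) * K, s, c, circ x x, circ x y, hkK, hs, hcβ, ?_,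
          comb f hf s s s x x (by ring) h1 h1, comb g hg s s s x x (by ring) h2 h2, cf, cg⟩
        have : c - s = q / (p + q) * (t - s) := by rw [hc]; linear_combination s * hpq
        rw [this, pow_succ']
        exact mul_le_mul hrq hst hst0 hr0
      · exfalso
        push Not at hcα hcβ
        have n1 := mul_neg_of_pos_of_neg hkK (hfneg c hcβ)
        have n2 := mul_neg_of_pos_of_neg hkK (hgneg c hcα)
        rcases le_max_iff.1 (hmax (circ x y)) with h | h <;> linarith
  obtain ⟨n, hn⟩ := exists_pow_lt_of_lt_one (sub_pos.2 hαβ) hr1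
  obtain ⟨K, s, t, x, y, hK, hs, ht, hst, -⟩ := main n
  linarith

/-- Maximum Theorem for two `(∘, p, q)`-convex functions. -/
theorem maximum_theorem_two_pqConvex
    {X : Type*} [Nonempty X] (circ : X → X → X) {p q : ℝ} (hp : 0 < p) (hq : 0 < q)
    {f g : X → ℝ} (hf : PQConvex circ p q f) (hg : PQConvex circ p q g)
    (hmax : ∀ x : X, 0 ≤ max (f x) (g x)) :
    ∃ lam ∈ Set.Icc (0:ℝ) 1, ∀ x : X, 0 ≤ lam * f x + (1 - lam) * g x := by
  have key := pq_key circ hp hq hf hg hmax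
  have hga : ∀ a, f a < 0 → 0 ≤ g a := by
    intro a ha
    rcases le_max_iff.1 (hmax a) with h | h
    · linarith
    · exact h
  have hfb : ∀ b, g b < 0 → 0 ≤ f b := by
    intro b hb
    rcases le_max_iff.1 (hmax b) with h | h
    · exact h
    · linarith
  let S : Set ℝ := {t | t = 0 ∨ ∃ b, g b < 0 ∧ t = -g b / (f b - g b)}
  have h0 : (0:ℝ) ∈ S := Or.inl rfl
  have hS1 : ∀ t ∈ S, t ≤ 1 := by
    rintro t (rfl | ⟨b, hb, rfl⟩)
    · norm_num
    · have := hfb b hb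
      rw [div_le_one (by linarith)]; linarith
  have hbdd : BddAbove S := ⟨1, hS1⟩
  have hl0 : 0 ≤ sSup S := le_csSup hbdd h0
  have hl1 : sSup S ≤ 1 := csSup_le ⟨0, h0⟩ hS1
  refine ⟨sSup S, ⟨hl0, hl1⟩, fun x => ?_⟩
  by_cases hfx : f x < 0
  · have hgx := hga x hfx
    have : sSup S ≤ g x / (g x - f x) := by
      refine csSup_le ⟨0, h0⟩ ?_
      rintro t (rfl | ⟨b, hb, rfl⟩)
      · exact div_nonneg hgx (by linarith)
      · have := hfb b hb
        rw [div_le_div_iff₀ (by linarith) (by linarith)]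
        linarith [key x b hfx hb]
    rw [le_div_iff₀ (by linarith)] at this
    linarith
  by_cases hgx : g x < 0
  · have hfx' := hfb x hgx
    have : -g x / (f x - g x) ≤ sSup S := le_csSup hbdd (Or.inr ⟨x, hgx, rfl⟩)
    rw [div_le_iff₀ (by linarith)] at this
    linarith
  · push Not at hfx hgx
    have := mul_nonneg hl0 hfx
    have := mul_nonneg (sub_nonneg.2 hl1) hgx
    linarith
end

section
/- Let $X$ be a nonempty set, $\circ : X \times X \to X$ a binary operation, and $p, q > 0$ constants. Let $f_1, \dots, f_n : X \to \mathbb{R}$ be $(\circ, p, q)$-convex functions such that $0 \le \max(f_1(x), \dots, f_n(x))$ for all $x \in X$. Then there exist $\lambda_1, \dots, \lambda_n \ge 0$ with $\lambda_1 + \cdots + \lambda_n = 1$ such that $0 \le \lambda_1 f_1(x) + \cdots + \lambda_n f_n(x)$ for all $x \in X$. -/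
theorem convex_of_closed_theta {E : Type*} [AddCommGroup E] [Module ℝ E] [TopologicalSpace E]
    [ContinuousAdd E] [ContinuousSMul ℝ E] (D : Set E) (hD : IsClosed D) (a b : ℝ) (ha : 0 < a)
    (hb : 0 < b) (hab : a + b = 1) (h : ∀ v ∈ D, ∀ w ∈ D, a • v + b • w ∈ D) :
    Convex ℝ D := by
  intro v hv w hw s t hs ht hst
  by_contra hcon
  let g : ℝ → E := fun z => (1 - z) • v + z • w
  have hg : Continuous g := by fun_prop
  have hT : IsClosed (g ⁻¹' D) := hD.preimage hg
  have hcon' : t ∉ g ⁻¹' D := by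
    have : s = 1 - t := by linarith
    subst this
    exact hcon
  have hcl : ∀ x ∈ g ⁻¹' D, ∀ y ∈ g ⁻¹' D, a * x + b * y ∈ g ⁻¹' D := by
    intro x hx y hy
    have := h _ hx _ hy
    have e : g (a * x + b * y) = a • g x + b • g y := by
      obtain rfl : b = 1 - a := by linarith
      simp only [g]
      module
    change g _ ∈ D
    rw [e]; exact this
  have h0 : (0 : ℝ) ∈ g ⁻¹' D := by simpa [g] using hv
  have h1 : (1 : ℝ) ∈ g ⁻¹' D := by simpa [g] using hw
  have t1 : t ≤ 1 := by linarith
  obtain ⟨x, hx⟩ := (isCompact_Icc.inter_left hT : IsCompact (g ⁻¹' D ∩ Set.Icc 0 t)).exists_isGreatest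
    ⟨0, h0, le_refl _, ht⟩
  obtain ⟨y, hy⟩ := (isCompact_Icc.inter_left hT : IsCompact (g ⁻¹' D ∩ Set.Icc t 1)).exists_isLeast
    ⟨1, h1, t1, le_refl _⟩
  obtain ⟨⟨hxD, hx0, hxt⟩, hxm⟩ := hx
  obtain ⟨⟨hyD, hyt, hy1⟩, hym⟩ := hy
  have hxt' : x < t := lt_of_le_of_ne hxt (by rintro rfl; exact hcon' hxD)
  have hm := hcl x hxD y hyD
  obtain rfl : b = 1 - a := by linarith
  have e1 : x < a * x + (1 - a) * y := by nlinarith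
  have e2 : a * x + (1 - a) * y < y := by nlinarith
  rcases le_total (a * x + (1 - a) * y) t with hh | hh
  · exact absurd (hxm ⟨hm, by linarith, hh⟩) (not_le.mpr e1)
  · exact absurd (hym ⟨hm, hh, by linarith⟩) (not_le.mpr e2)

/-- The discrete Maximum Theorem for `(∘, p, q)`-convex functions. -/
theorem maximum_theorem_pqConvex
    {X : Type*} [Nonempty X] (circ : X → X → X) {p q : ℝ} (hp : 0 < p) (hq : 0 < q)
    {n : ℕ} (hn : 0 < n) (f : Fin n → X → ℝ)
    (hconv : ∀ i, PQConvex circ p q (f i))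
    (hmax : ∀ x : X, 0 ≤ Finset.univ.sup' ⟨⟨0, hn⟩, Finset.mem_univ _⟩ fun i => f i x) :
    ∃ lam : Fin n → ℝ, (∀ i, 0 ≤ lam i) ∧ (∑ i, lam i = 1) ∧
      ∀ x : X, 0 ≤ ∑ i, lam i * f i x := by
  have hr : 0 < p + q := by linarith
  let C : Set (Fin n → ℝ) := {v | ∃ (k : ℕ) (x : X), ∀ i, f i x ≤ (p + q) ^ k * v i}
  have hup : ∀ (v : Fin n → ℝ) (k : ℕ) (x : X), (∀ i, f i x ≤ (p + q) ^ k * v i) →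
      ∀ m : ℕ, ∃ x, ∀ i, f i x ≤ (p + q) ^ (k + m) * v i := by
    intro v k x hx m
    induction m with
    | zero => exact ⟨x, hx⟩
    | succ m ih =>
      obtain ⟨y, hy⟩ := ih
      refine ⟨circ y y, fun i => (hconv i y y).trans ?_⟩
      have := mul_le_mul_of_nonneg_left (hy i) hr.le
      rw [← add_assoc, pow_succ]
      linarith
  have hC : ∀ v ∈ C, ∀ w ∈ C, (p / (p + q)) • v + (q / (p + q)) • w ∈ C := by
    rintro v ⟨k, x, hx⟩ w ⟨l, y, hy⟩
    obtain ⟨x', hx'⟩ := hup v k x hx l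
    obtain ⟨y', hy'⟩ := hup w l y hy k
    refine ⟨k + l + 1, circ x' y', fun i => (hconv i x' y').trans ?_⟩
    have e1 := mul_le_mul_of_nonneg_left (hx' i) hp.le
    have e2 := mul_le_mul_of_nonneg_left (hy' i) hq.le
    rw [add_comm l k] at e2
    refine (add_le_add e1 e2).trans (le_of_eq ?_)
    simp only [Pi.add_apply, Pi.smul_apply, smul_eq_mul]
    rw [pow_succ]
    field_simp
  have hDc : Convex ℝ (closure C) := by
    refine convex_of_closed_theta _ isClosed_closure (p / (p + q)) (q / (p + q)) (by positivity)
      (by positivity) (by field_simp) ?_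
    intro v hv w hw
    exact map_mem_closure₂ (f := fun v w : Fin n → ℝ => (p / (p + q)) • v + (q / (p + q)) • w)
      (by fun_prop) hv hw hC
  let N : Set (Fin n → ℝ) := Set.pi Set.univ (fun _ => Set.Iio 0)
  have hNo : IsOpen N := isOpen_set_pi Set.finite_univ (fun _ _ => isOpen_Iio)
  have hNc : Convex ℝ N := convex_pi (fun _ _ => convex_Iio 0)
  have hdisj : Disjoint N C := by
    rw [Set.disjoint_left]
    rintro v hv ⟨k, x, hx⟩
    have := hmax x
    obtain ⟨i, -, hi⟩ := (Finset.le_sup'_iff _).1 this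
    have h1 : v i < 0 := hv i (Set.mem_univ _)
    have h2 := hx i
    have h3 : 0 < (p + q) ^ k := by positivity
    nlinarith
  obtain ⟨φ, u, hφN, hφD⟩ := geometric_hahn_banach_open hNc hNo hDc (hdisj.closure_right hNo)
  let μ : Fin n → ℝ := fun i => φ (Pi.single i 1)
  have hφ : ∀ v, φ v = ∑ i, μ i * v i := by
    intro v
    conv_lhs => rw [pi_eq_sum_univ' v]
    rw [map_sum]
    refine Finset.sum_congr rfl fun i _ => ?_
    rw [map_smul, smul_eq_mul, mul_comm]
  have hu : 0 ≤ u := by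
    by_contra! hu
    have hε : 0 < -u / (|φ (fun _ => 1)| + 1) := div_pos (by linarith) (by positivity)
    set ε := -u / (|φ (fun _ => 1)| + 1) with he
    have h1 := hφN ((-ε) • (fun _ => 1)) (by intro i _; simp [hε])
    rw [map_smul, smul_eq_mul] at h1
    have h2 : ε * (|φ (fun _ => 1)| + 1) = -u := by rw [he]; field_simp
    nlinarith [le_abs_self (φ (fun _ => 1))]
  have hFC : ∀ x, (fun i => f i x) ∈ C := fun x => ⟨0, x, fun i => by simp⟩
  have hpos : ∀ x, 0 ≤ ∑ i, μ i * f i x := fun x => by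
    rw [← hφ (fun i => f i x)]
    exact hu.trans (hφD _ (subset_closure (hFC x)))
  obtain ⟨x0⟩ := ‹Nonempty X›
  have hμ : ∀ i, 0 ≤ μ i := by
    intro i
    by_contra! hi
    set A := φ (fun i => f i x0) with hA
    have hA0 : 0 ≤ A := hu.trans (hφD _ (subset_closure (hFC x0)))
    have hM : 0 ≤ (A + 1) / (-μ i) := div_nonneg (by linarith) (by linarith)
    have hm : (fun i => f i x0) + ((A + 1) / (-μ i)) • (Pi.single i (1 : ℝ) : Fin n → ℝ) ∈ C := by
      refine ⟨0, x0, fun j => ?_⟩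
      have : 0 ≤ (Pi.single i (1 : ℝ) : Fin n → ℝ) j := by
        by_cases h : j = i
        · subst h; simp
        · simp [h]
      have := mul_nonneg hM this
      simp only [pow_zero, one_mul, Pi.add_apply, Pi.smul_apply, smul_eq_mul]
      linarith
    have h1 := hφD _ (subset_closure hm)
    rw [map_add, map_smul, smul_eq_mul] at h1
    have h2 : (A + 1) / (-μ i) * μ i = -(A + 1) := by
      have := hi.ne
      field_simp
    change u ≤ A + (A + 1) / (-μ i) * μ i at h1
    linarith
  have hs0 : 0 ≤ ∑ i, μ i := Finset.sum_nonneg fun i _ => hμ i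
  have hs : 0 < ∑ i, μ i := by
    refine lt_of_le_of_ne hs0 fun h => ?_
    have hz := (Finset.sum_eq_zero_iff_of_nonneg (fun i _ => hμ i)).1 h.symm
    have hφ0 : ∀ v, φ v = 0 := fun v => by
      rw [hφ]; exact Finset.sum_eq_zero fun i hi => by rw [hz i hi, zero_mul]
    have h1 := hφN (fun _ => -1) (by intro i _; simp)
    have h2 := hφD _ (subset_closure (hFC x0))
    rw [hφ0] at h1 h2
    linarith
  refine ⟨fun i => μ i / ∑ j, μ j, fun i => div_nonneg (hμ i) hs0, ?_, fun x => ?_⟩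
  · rw [← Finset.sum_div, div_self hs.ne']
  · have : ∑ i, μ i / (∑ j, μ j) * f i x = (∑ i, μ i * f i x) / ∑ j, μ j := by
      rw [Finset.sum_div]
      exact Finset.sum_congr rfl fun i _ => by ring
    rw [this]
    exact div_nonneg (hpos x) hs0
end

section
/- Let $X$ be a nonempty set, $\circ : X \times X \to X$ a binary operation, and $p, q > 0$ constants. Let $f_0, f_1, \dots, f_n : X \to \mathbb{R}$ be $(\circ, p, q)$-convex functions, and suppose $x_0 \in X$ satisfies $f_0(x_0) = 0$ and $x_0$ is a solution of the constrained optimization problem: minimize $f_0(x)$ subject to $f_1(x) \le 0, \dots, f_n(x) \le 0$ (i.e., $f_i(x_0) \le 0$ for $i = 1, \dots, n$, and $f_0(x_0) \le f_0(x)$ for every $x \in X$ with $f_1(x) \le 0, \dots, f_n(x) \le 0$). Then there exist $\lambda_0, \lambda_1, \dots, \lambda_n \ge 0$ with $\lambda_0 + \lambda_1 + \cdots + \lambda_n = 1$ such that the transversality conditions $\lambda_1 f_1(x_0) = \cdots = \lambda_n f_n(x_0) = 0$ hold and $0 \le \lambda_0 f_0(x) + \lambda_1 f_1(x) + \cdots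 + \lambda_n f_n(x)$ for all $x \in X$. -/
theorem closed_theta_convex {E : Type*} [NormedAddCommGroup E] [NormedSpace ℝ E] (K : Set E)
    (hK : IsClosed K) (a b : ℝ) (ha : 0 < a) (hb : 0 < b) (hab : a + b = 1)
    (h : ∀ u ∈ K, ∀ v ∈ K, a • u + b • v ∈ K) : Convex ℝ K := by
  intro x hx y hy c z hc hz hcz
  let g : ℝ → E := fun s => (1 - s) • x + s • y
  have hg : Continuous g := by fun_prop
  have hT : IsClosed (g ⁻¹' K) := hK.preimage hg
  have hgz : c • x + z • y = g z := by
    have : c = 1 - z := by linarith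
    simp [g, this]
  rw [hgz]
  have h0 : (0:ℝ) ∈ g ⁻¹' K := by simpa [g] using hx
  have h1 : (1:ℝ) ∈ g ⁻¹' K := by simpa [g] using hy
  have hz1 : z ≤ 1 := by linarith
  have hc1 : IsCompact (g ⁻¹' K ∩ Set.Icc 0 z) := isCompact_Icc.inter_left hT
  have hc2 : IsCompact (g ⁻¹' K ∩ Set.Icc z 1) := isCompact_Icc.inter_left hT
  obtain ⟨l, ⟨hlT, hl⟩, hlmax⟩ := hc1.exists_isGreatest ⟨0, h0, le_rfl, hz⟩
  obtain ⟨r, ⟨hrT, hr⟩, hrmin⟩ := hc2.exists_isLeast ⟨1, h1, hz1, le_rfl⟩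
  have hm : a * l + b * r ∈ g ⁻¹' K := by
    have := h _ hlT _ hrT
    have e : a • g l + b • g r = g (a * l + b * r) := by
      have ha' : a = 1 - b := by linarith
      simp only [g, ha']
      module
    rw [e] at this
    exact this
  rcases hl.2.eq_or_lt with e | hlz
  · rw [← e]; exact hlT
  have hrz := hr.1
  have hlm : l < a * l + b * r := by nlinarith
  have hmr : a * l + b * r < r := by nlinarith
  rcases le_total (a * l + b * r) z with h' | h'
  · have := hlmax ⟨hm, by linarith [hl.1], h'⟩
    linarith
  · have := hrmin ⟨hm, h', by linarith [hr.2]⟩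
    linarith

theorem pq_gordan {X ι : Type*} [Fintype ι] [DecidableEq ι] (circ : X → X → X) {p q : ℝ}
    (hp : 0 < p) (hq : 0 < q) (F : ι → X → ℝ) (hF : ∀ i, PQConvex circ p q (F i))
    (x0 : X) (hneg : ∀ x, ∃ i, 0 ≤ F i x) :
    ∃ lam : ι → ℝ, (∀ i, 0 ≤ lam i) ∧ ∑ i, lam i = 1 ∧ ∀ x, 0 ≤ ∑ i, lam i * F i x := by
  have hr : 0 < p + q := by linarith
  let A : Set (ι → ℝ) := {v | ∃ (k : ℕ) (x : X), ∀ i, F i x ≤ (p + q) ^ k * v i}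
  have lift : ∀ (v : ι → ℝ) (k : ℕ) (x : X), (∀ i, F i x ≤ (p + q) ^ k * v i) →
      ∀ m : ℕ, ∃ y, ∀ i, F i y ≤ (p + q) ^ (k + m) * v i := by
    intro v k x hx m
    induction m with
    | zero => exact ⟨x, hx⟩
    | succ m ih =>
      obtain ⟨y, hy⟩ := ih
      refine ⟨circ y y, fun i => (hF i y y).trans ?_⟩
      have := mul_le_mul_of_nonneg_left (hy i) hr.le
      rw [← add_assoc, pow_succ]
      linarith
  have hA : ∀ u ∈ A, ∀ v ∈ A, (p / (p + q)) • u + (q / (p + q)) • v ∈ A := by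
    rintro u ⟨k, x, hx⟩ v ⟨l, y, hy⟩
    obtain ⟨x', hx'⟩ := lift u k x hx l
    obtain ⟨y', hy'⟩ := lift v l y hy k
    refine ⟨k + l + 1, circ x' y', fun i => (hF i x' y').trans ?_⟩
    have h1 := mul_le_mul_of_nonneg_left (hx' i) hp.le
    have h2 := mul_le_mul_of_nonneg_left (hy' i) hq.le
    rw [add_comm l k] at h2
    have e : (p + q) ^ (k + l + 1) * ((p / (p + q)) • u + (q / (p + q)) • v) i
        = p * ((p + q) ^ (k + l) * u i) + q * ((p + q) ^ (k + l) * v i) := by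
      simp only [Pi.add_apply, Pi.smul_apply, smul_eq_mul]
      rw [pow_succ]
      field_simp
    rw [e]
    linarith
  have hK : Convex ℝ (closure A) := by
    refine closed_theta_convex _ isClosed_closure (p / (p + q)) (q / (p + q))
      (by positivity) (by positivity) (by field_simp) ?_
    intro u hu v hv
    exact map_mem_closure₂ (f := fun u v : ι → ℝ => (p / (p + q)) • u + (q / (p + q)) • v)
      (by fun_prop) hu hv hA
  let N : Set (ι → ℝ) := Set.univ.pi fun _ => Set.Iio 0
  have hNo : IsOpen N := isOpen_set_pi Set.finite_univ fun _ _ => isOpen_Iio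
  have hNc : Convex ℝ N := convex_pi fun _ _ => convex_Iio 0
  have hdis : Disjoint N (closure A) := by
    refine Disjoint.closure_right ?_ hNo
    rw [Set.disjoint_left]
    rintro v hv ⟨k, x, hx⟩
    obtain ⟨i, hi⟩ := hneg x
    have h1 : v i < 0 := hv i trivial
    have h2 : 0 < (p + q) ^ k := by positivity
    nlinarith [hx i]
  obtain ⟨φ, s, hs1, hs2⟩ := geometric_hahn_banach_open hNc hNo hK hdis
  have hmem : ∀ (x : X) (w : ι → ℝ), (∀ i, F i x ≤ w i) → s ≤ φ w := fun x w h =>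
    hs2 _ (subset_closure ⟨0, x, by simpa using h⟩)
  have hs0 : 0 ≤ s := by
    by_contra hcon
    push Not at hcon
    have hone : ∀ t : ℝ, 0 < t → t * φ (fun _ => -1) < s := fun t ht => by
      have := hs1 (t • fun _ => -1) (fun i _ => by simpa using ht)
      simpa using this
    set c := φ (fun _ => -1)
    have h1 := hone 1 one_pos
    have hc : c < 0 := by linarith
    have h2 := hone (s / (2 * c)) (div_pos_of_neg_of_neg hcon (by linarith))
    have : s / (2 * c) * c = s / 2 := by
      have : c ≠ 0 := hc.ne
      field_simp
    linarith
  have hφ : ∀ w : ι → ℝ, φ w = ∑ i, φ (Pi.single i 1) * w i := by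
    intro w
    conv_lhs => rw [pi_eq_sum_univ' w]
    simp [map_sum, mul_comm]
    
  have hnn : ∀ i, 0 ≤ φ (Pi.single i 1) := by
    intro i
    by_contra hcon
    push Not at hcon
    set c := φ (Pi.single i 1)
    have hb := hmem x0 (fun j => F j x0) fun _ => le_rfl
    set B := φ (fun j => F j x0) with hB
    have hB0 : 0 ≤ B := hs0.trans hb
    have ht : 0 < (B + 1) / (-c) := div_pos (by linarith) (by linarith)
    have h2 := hmem x0 ((fun j => F j x0) + ((B + 1) / (-c)) • Pi.single i 1) fun j => by
      have : (0:ℝ) ≤ (Pi.single i 1 : ι → ℝ) j := by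
        by_cases h : j = i
        · subst h; simp
        · simp [h]
      have := mul_nonneg ht.le this
      simpa using this
    rw [map_add, map_smul, smul_eq_mul] at h2
    have e : (B + 1) / (-c) * c = -(B + 1) := by
      have : c ≠ 0 := hcon.ne
      field_simp
    change s ≤ B + (B + 1) / (-c) * c at h2
    linarith
  have hpos : 0 < ∑ i, φ (Pi.single i 1) := by
    have h1 := hs1 (fun _ => -1) (fun i _ => by simp)
    refine lt_of_le_of_ne (Finset.sum_nonneg fun i _ => hnn i) fun h0 => ?_
    have hz := (Finset.sum_eq_zero_iff_of_nonneg fun i _ => hnn i).1 h0.symm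
    have hzero : ∀ w, φ w = 0 := fun w => by
      rw [hφ]; exact Finset.sum_eq_zero fun i hi => by rw [hz i hi, zero_mul]
    have h2 := hmem x0 (fun j => F j x0) fun _ => le_rfl
    rw [hzero] at h1 h2
    linarith
  refine ⟨fun i => φ (Pi.single i 1) / ∑ j, φ (Pi.single j 1),
    fun i => div_nonneg (hnn i) hpos.le, ?_, fun x => ?_⟩
  · rw [← Finset.sum_div, div_self hpos.ne']
  · have h2 := hs0.trans (hmem x (fun j => F j x) fun _ => le_rfl)
    rw [hφ] at h2
    have := div_nonneg h2 hpos.le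
    rw [Finset.sum_div] at this
    refine this.trans_eq (Finset.sum_congr rfl fun i _ => by ring)

/-- Karush–Kuhn–Tucker theorem for `(∘, p, q)`-convex functions: necessity of the
multiplier rule and the transversality conditions. -/
theorem kkt_necessity_pqConvex
    {X : Type*} [Nonempty X] (circ : X → X → X) {p q : ℝ} (hp : 0 < p) (hq : 0 < q)
    {n : ℕ} (f0 : X → ℝ) (f : Fin n → X → ℝ)
    (hconv0 : PQConvex circ p q f0) (hconv : ∀ i, PQConvex circ p q (f i))
    {x0 : X} (hx0 : f0 x0 = 0) (hadm : ∀ i, f i x0 ≤ 0)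
    (hmin : ∀ x : X, (∀ i, f i x ≤ 0) → f0 x0 ≤ f0 x) :
    ∃ (lam0 : ℝ) (lam : Fin n → ℝ), 0 ≤ lam0 ∧ (∀ i, 0 ≤ lam i) ∧
      (lam0 + ∑ i, lam i = 1) ∧ (∀ i, lam i * f i x0 = 0) ∧
      ∀ x : X, 0 ≤ lam0 * f0 x + ∑ i, lam i * f i x := by
  obtain ⟨lam, h1, h2, h3⟩ := pq_gordan (ι := Option (Fin n)) circ hp hq
    (fun o => o.elim f0 f) (fun o => by cases o; exacts [hconv0, hconv _]) x0 (fun x => by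
      by_contra hcon
      push Not at hcon
      have ha := hmin x fun i => (hcon (some i)).le
      have hb : f0 x < 0 := hcon none
      linarith)
  simp only [Fintype.sum_option, Option.elim] at h2 h3
  refine ⟨lam none, fun i => lam (some i), h1 _, fun i => h1 _, h2, ?_, h3⟩
  have h4 := h3 x0
  rw [hx0, mul_zero, zero_add] at h4
  have hle : ∀ i ∈ Finset.univ, lam (some i) * f i x0 ≤ 0 := fun i _ =>
    mul_nonpos_of_nonneg_of_nonpos (h1 _) (hadm i)
  have h5 := le_antisymm (Finset.sum_nonpos hle) h4
  intro i
  exact (Finset.sum_eq_zero_iff_of_nonpos hle).1 h5 i (Finset.mem_univ i)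
end
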